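/- arXiv:2401.02890 — 2 statements merged into one kernel-verified Lean document; each statement's English description precedes it below -/
import Mathlib

section
/- Let d₁, N be positive integers, L ≥ 0 and R > 0. Let ψ : ℝ^{d₁} → ℝ be defined by ψ(y) = σ(min{ min_{k≠j}(1 + y_k − y_j), min_k(1 + y_k), min_k(1 − y_k) }), where σ(u) = max{u,0} is the ReLU function. Let h : ℝ^{d₁} → ℝ be any function of the form h(y) = ∑_{i=1}^{(N+1)^{d₁}} c_i ψ( (N/(2R)) (y − b_i) ), where c_i ∈ ℝ with |c_i| ≤ L and b_i ∈ ℝ^{d₁}. Then for all x, y ∈ ℝ^{d₁}, |h(x) − h(y)| ≤ (L/R) · N (N+1)^{d₁} (d₁² + d₁) ‖x − y‖₁. -/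
/-!
For the `ℓ¹` norm, each affine function in the minimum defining `psi` is `1`-Lipschitz: its linear
part has coefficients in `{-1, 0, 1}`. Finite minima and the positive part preserve this, so `psi`
is `1`-Lipschitz. Hence a single unit `y ↦ c ψ(a (y - b))` has Lipschitz constant `|c| |a|`, and
summing over the units gives the constant `L N (N + 1) ^ d₁ / (2 R)` for the network; the
factor `d₁² + d₁` is slack.
-/

/-- The function `ψ(y) = σ(min{min_{k≠j}(1 + y_k − y_j), min_k(1 + y_k), min_k(1 − y_k)})`,
where `σ` is the ReLU.  (For `k = j` the value `1 + y_k` is used, which is already a member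
of the second family, so the minimum is unchanged.) -/
noncomputable def psi (d : ℕ) (hd : 0 < d) (y : Fin d → ℝ) : ℝ :=
  max ((Finset.univ : Finset ((Fin d × Fin d) ⊕ (Fin d ⊕ Fin d))).inf'
    ⟨Sum.inr (Sum.inl ⟨0, hd⟩), Finset.mem_univ _⟩
    (fun p => match p with
      | Sum.inl (k, j) => if k = j then 1 + y k else 1 + y k - y j
      | Sum.inr (Sum.inl k) => 1 + y k
      | Sum.inr (Sum.inr k) => 1 - y k)) 0

theorem lipschitzWith_finset_inf' {ι α : Type*} [PseudoEMetricSpace α] {s : Finset ι}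
    (hs : s.Nonempty) {f : ι → α → ℝ} {K : NNReal} (hf : ∀ i ∈ s, LipschitzWith K (f i)) :
    LipschitzWith K fun x => s.inf' hs fun i => f i x := by
  simpa only [← Finset.inf'_apply] using
    Finset.inf'_induction hs f (fun _ h₁ _ h₂ => max_self K ▸ h₁.min h₂) hf

theorem lipschitzWith_sum_smul {ι 𝕜 α F : Type*} [PseudoMetricSpace α] [NormedField 𝕜]
    [SeminormedAddCommGroup F] [NormedSpace 𝕜 F] (s : Finset ι) (c : ι → 𝕜) {f : ι → α → F}
    {K : ι → NNReal} (hf : ∀ i ∈ s, LipschitzWith (K i) (f i)) :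
    LipschitzWith (∑ i ∈ s, ‖c i‖₊ * K i) fun x => ∑ i ∈ s, c i • f i x := by
  refine LipschitzWith.of_dist_le_mul fun x y => ?_
  push_cast
  rw [Finset.sum_mul]
  refine dist_sum_sum_le_of_le s fun i hi => ?_
  calc dist (c i • f i x) (c i • f i y) ≤ ‖c i‖ * dist (f i x) (f i y) := dist_smul_le ..
    _ ≤ ‖c i‖ * (K i * dist x y) := by gcongr; exact (hf i hi).dist_le_mul x y
    _ = ‖c i‖ * K i * dist x y := (mul_assoc ..).symm

theorem lipschitzWith_comp_smul_sub {𝕜 E β : Type*} [NormedField 𝕜] [SeminormedAddCommGroup E]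
    [NormedSpace 𝕜 E] [PseudoEMetricSpace β] {f : E → β} {K : NNReal} (hf : LipschitzWith K f)
    (a : 𝕜) (b : E) : LipschitzWith (K * ‖a‖₊) fun x => f (a • (x - b)) := by
  have h_affine : LipschitzWith ‖a‖₊ fun x => a • (x - b) := by
    have h_sub : LipschitzWith 1 fun x => x - b := by
      simpa using LipschitzWith.id.sub (LipschitzWith.const b)
    exact mul_one ‖a‖₊ ▸ (lipschitzWith_smul a).comp h_sub
  exact hf.comp h_affine

section PiLpOne

variable {ι E : Type*} [Fintype ι] [SeminormedAddCommGroup E]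

theorem norm_apply_sub_apply_le_of_L1 (u : PiLp 1 fun _ : ι => E) (k j : ι) :
    ‖u k - u j‖ ≤ ‖u‖ := by
  rcases eq_or_ne k j with rfl | hkj
  · simp
  · calc ‖u k - u j‖ ≤ ‖u k‖ + ‖u j‖ := norm_sub_le ..
      _ ≤ ∑ i, ‖u i‖ :=
        Finset.add_le_sum (fun i _ => norm_nonneg (u i)) (Finset.mem_univ k) (Finset.mem_univ j) hkj
      _ = ‖u‖ := (PiLp.norm_eq_of_L1 u).symm

theorem lipschitzWith_apply_sub_apply_of_L1 (k j : ι) :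
    LipschitzWith 1 fun y : PiLp 1 fun _ : ι => E => y k - y j := by
  refine LipschitzWith.mk_one fun u v => ?_
  rw [dist_eq_norm, dist_eq_norm, sub_sub_sub_comm]
  exact norm_apply_sub_apply_le_of_L1 (u - v) k j

end PiLpOne

theorem lipschitzWith_psi (d : ℕ) (hd : 0 < d) :
    LipschitzWith 1 fun y : PiLp 1 fun _ : Fin d => ℝ => psi d hd y := by
  have h_coord (k : Fin d) : LipschitzWith 1 fun y : PiLp 1 fun _ : Fin d => ℝ => y k :=
    LipschitzWith.mk_one fun u v => PiLp.dist_apply_le u v k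
  refine (lipschitzWith_finset_inf' _ fun p _ => ?_).max_const 0
  rcases p with ⟨k, j⟩ | k | k
  · dsimp only
    split_ifs
    · simpa using (LipschitzWith.const 1).add (h_coord k)
    · simpa [add_sub_assoc] using
        (LipschitzWith.const 1).add (lipschitzWith_apply_sub_apply_of_L1 k j)
  · simpa using (LipschitzWith.const 1).add (h_coord k)
  · simpa using (LipschitzWith.const 1).sub (h_coord k)

theorem abs_network_sub_le_general {ι : Type*} [Fintype ι] (d : ℕ) (hd : 0 < d) (c a : ι → ℝ)
    (b : ι → Fin d → ℝ) (x y : Fin d → ℝ) :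
    |(∑ i, c i * psi d hd (fun k => a i * (x k - b i k))) -
      (∑ i, c i * psi d hd (fun k => a i * (y k - b i k)))| ≤
      (∑ i, |c i| * |a i|) * ∑ k, |x k - y k| := by
  have h_unit (i : ι) : LipschitzWith ‖a i‖₊ fun z : PiLp 1 fun _ : Fin d => ℝ =>
      psi d hd fun k => a i * (z k - b i k) := by
    rw [← one_mul ‖a i‖₊]
    exact lipschitzWith_comp_smul_sub (lipschitzWith_psi d hd) (a i) (WithLp.toLp 1 (b i))
  have h_network := lipschitzWith_sum_smul Finset.univ c fun i _ => h_unit i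
  simpa [Real.dist_eq, PiLp.dist_eq_of_L1] using
    h_network.dist_le_mul (WithLp.toLp 1 x) (WithLp.toLp 1 y)

theorem sum_abs_mul_abs_grid_scale_le {d N : ℕ} (hd : 0 < d) {L R : ℝ} (hL : 0 ≤ L) (hR : 0 < R)
    {c : Fin ((N + 1) ^ d) → ℝ} (hc : ∀ i, |c i| ≤ L) :
    ∑ i, |c i| * |N / (2 * R)| ≤ L / R * N * ((N : ℝ) + 1) ^ d * ((d : ℝ) ^ 2 + d) := by
  have h_dim : 1 / 2 ≤ (d : ℝ) ^ 2 + d := by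
    have : (1 : ℝ) ≤ d := mod_cast hd
    nlinarith
  calc
    ∑ i, |c i| * |N / (2 * R)| ≤ ∑ _ : Fin ((N + 1) ^ d), L * (N / (2 * R)) := by
      rw [abs_of_nonneg (by positivity : 0 ≤ N / (2 * R))]
      gcongr with i
      exact hc i
    _ = L / R * N * ((N : ℝ) + 1) ^ d * (1 / 2) := by
      rw [Finset.sum_const, Finset.card_univ, Fintype.card_fin, nsmul_eq_mul]
      push_cast
      ring
    _ ≤ L / R * N * ((N : ℝ) + 1) ^ d * ((d : ℝ) ^ 2 + d) := by gcongr

/-- Any network output `h(y) = ∑_{i=1}^{(N+1)^{d₁}} cᵢ ψ((N/(2R))(y − bᵢ))` with `|cᵢ| ≤ L`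
satisfies `|h(x) − h(y)| ≤ (L/R) N (N+1)^{d₁} (d₁² + d₁) ‖x − y‖₁`. -/
theorem abs_network_sub_le (d₁ N : ℕ) (hd : 0 < d₁) (hN : 0 < N)
    (L R : ℝ) (hL : 0 ≤ L) (hR : 0 < R)
    (c : Fin ((N + 1) ^ d₁) → ℝ) (hc : ∀ i, |c i| ≤ L)
    (b : Fin ((N + 1) ^ d₁) → Fin d₁ → ℝ) (x y : Fin d₁ → ℝ) :
    |(∑ i, c i * psi d₁ hd (fun k => (N / (2 * R)) * (x k - b i k))) -
      (∑ i, c i * psi d₁ hd (fun k => (N / (2 * R)) * (y k - b i k)))| ≤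
      (L / R) * N * ((N : ℝ) + 1) ^ d₁ * ((d₁ : ℝ) ^ 2 + d₁) * ∑ k, |x k - y k| :=
  (abs_network_sub_le_general d₁ hd c (fun _ => N / (2 * R)) b x y).trans <|
    mul_le_mul_of_nonneg_right (sum_abs_mul_abs_grid_scale_le hd hL hR hc) (by positivity)
end

section
/- For all real numbers β > 0, γ > 0 and every nonnegative integer i, one has β / ( γ^{2i} · ( (β²/2)(1 + √(1 + (2/(βγ))²)) + 1/γ² )^{i + 1/2} ) ≤ βγ / (1 + βγ/2)^{2i+1}. -/
/-!
Put `x = βγ / 2`. The base of the real power is a perfect square,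
`(β² / 2) (1 + √(1 + x⁻²)) + γ⁻² = ((x + √(1 + x²)) / γ)²`, and `x + √(1 + x²) = exp (arsinh x)`.
Hence the eigenvalue equals `βγ / exp (arsinh x) ^ (2i + 1)`, and the bound is
`1 ≤ √(1 + x²)`.
-/

open Real

/-- The `s`-th eigenvalue of the integral operator of the Gaussian kernel `exp (-(x - t)² / γ²)`
with respect to a Gaussian measure of bandwidth `β`, with the index extended to real `s` by the
same formula. -/
noncomputable def gaussianKernelEigenvalue (β γ s : ℝ) : ℝ :=
  β / (γ ^ (2 * s) * ((β ^ 2 / 2) * (1 + √(1 + (2 / (β * γ)) ^ 2)) + 1 / γ ^ 2) ^ (s + 1 / 2))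

lemma one_add_le_exp_arsinh (x : ℝ) : 1 + x ≤ exp (arsinh x) := by
  have one_le_sqrt : 1 ≤ √(1 + x ^ 2) := Real.one_le_sqrt.mpr (by linarith [sq_nonneg x])
  rw [exp_arsinh]
  linarith

lemma mul_sqrt_one_add_inv_sq {x : ℝ} (hx : 0 < x) : x * √(1 + x⁻¹ ^ 2) = √(1 + x ^ 2) := by
  calc x * √(1 + x⁻¹ ^ 2) = √(x ^ 2) * √(1 + x⁻¹ ^ 2) := by rw [sqrt_sq hx.le]
    _ = √(x ^ 2 * (1 + x⁻¹ ^ 2)) := (sqrt_mul (sq_nonneg x) _).symm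
    _ = √(1 + x ^ 2) := by congr 1; field_simp; ring

lemma exp_arsinh_sq {x : ℝ} (hx : 0 < x) :
    exp (arsinh x) ^ 2 = 2 * x ^ 2 * (1 + √(1 + x⁻¹ ^ 2)) + 1 := by
  have sq_sqrt : √(1 + x ^ 2) ^ 2 = 1 + x ^ 2 := Real.sq_sqrt (by positivity)
  calc exp (arsinh x) ^ 2 = (x + √(1 + x ^ 2)) ^ 2 := by rw [exp_arsinh]
    _ = 2 * x ^ 2 + 2 * x * √(1 + x ^ 2) + 1 := by linear_combination sq_sqrt
    _ = 2 * x ^ 2 * (1 + √(1 + x⁻¹ ^ 2)) + 1 := by rw [← mul_sqrt_one_add_inv_sq hx]; ring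

lemma gaussianKernelEigenvalue_base_eq_sq {β γ : ℝ} (h : 0 < β * γ) :
    (β ^ 2 / 2) * (1 + √(1 + (2 / (β * γ)) ^ 2)) + 1 / γ ^ 2 =
      (exp (arsinh (β * γ / 2)) / γ) ^ 2 := by
  have hγ : γ ≠ 0 := right_ne_zero_of_mul h.ne'
  rw [div_pow (exp _), exp_arsinh_sq (half_pos h), inv_div]
  field_simp

lemma gaussianKernelEigenvalue_eq_div_exp_arsinh {β γ : ℝ} (hβ : 0 < β) (hγ : 0 < γ) (s : ℝ) :
    gaussianKernelEigenvalue β γ s = β * γ / exp (arsinh (β * γ / 2)) ^ (2 * s + 1) := by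
  set E := exp (arsinh (β * γ / 2))
  have hE : 0 < E := exp_pos _
  have power_of_sq : ((E / γ) ^ 2) ^ (s + 1 / 2) = E ^ (2 * s + 1) / (γ ^ (2 * s) * γ) := by
    rw [← rpow_natCast_mul (by positivity), ← rpow_add_one hγ.ne', ← div_rpow hE.le hγ.le]
    congr 1
    push_cast
    ring
  rw [gaussianKernelEigenvalue, gaussianKernelEigenvalue_base_eq_sq (mul_pos hβ hγ), power_of_sq]
  field_simp

theorem gaussian_eigenvalue_bound_general {β γ s : ℝ} (hβ : 0 < β) (hγ : 0 < γ)
    (hs : -1 / 2 ≤ s) :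
    gaussianKernelEigenvalue β γ s ≤ β * γ / (1 + β * γ / 2) ^ (2 * s + 1) := by
  rw [gaussianKernelEigenvalue_eq_div_exp_arsinh hβ hγ]
  gcongr
  · linarith
  · exact one_add_le_exp_arsinh _

/-- For all `β, γ > 0` and every nonnegative integer `i`,
`β / (γ^{2i} ((β²/2)(1 + √(1 + (2/(βγ))²)) + 1/γ²)^{i + 1/2}) ≤ βγ / (1 + βγ/2)^{2i+1}`:
the explicit Gaussian-kernel eigenvalues decay at least geometrically. -/
theorem gaussian_eigenvalue_bound (β γ : ℝ) (hβ : 0 < β) (hγ : 0 < γ) (i : ℕ) :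
    β / (γ ^ (2 * i) *
        ((β ^ 2 / 2) * (1 + Real.sqrt (1 + (2 / (β * γ)) ^ 2)) + 1 / γ ^ 2) ^
          ((i : ℝ) + 1 / 2)) ≤
      β * γ / (1 + β * γ / 2) ^ (2 * i + 1) := by
  have bound := gaussian_eigenvalue_bound_general hβ hγ
    (show (-1 / 2 : ℝ) ≤ i by linarith [i.cast_nonneg (α := ℝ)])
  unfold gaussianKernelEigenvalue at bound
  exact_mod_cast bound
end
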